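/- arXiv:2604.26945 — 6 statements merged into one kernel-verified Lean document; each statement's English description precedes it below -/
import Mathlib

section
/- Let M, K be n×n real matrices, let Q₀ be an n×n real matrix with Q₀·Q₀ = Q₀ and M·Q₀ = 0, set P₀ = I − Q₀ and M₁ = M + K·Q₀, and assume M₁ is invertible. Let f ∈ ℝⁿ be a fixed vector and let x : ℝ → ℝⁿ be differentiable with M·x'(t) + K·x(t) = f for every t. Define y(t) = P₀·x(t) and z(t) = Q₀·x(t). Then for every t, the function y has derivative y'(t) = −P₀·M₁⁻¹·K·y(t) + P₀·M₁⁻¹·f at t, and z(t) = −Q₀·M₁⁻¹·K·y(t) + Q₀·M₁⁻¹·f. -/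
/-!
Since `M Q₀ = 0` and `Q₀² = Q₀`, the matrix `M₁ = M + K Q₀` satisfies `M₁ P₀ = M` and
`M₁ Q₀ = K Q₀`, that is, `M₁⁻¹ M = P₀` and `M₁⁻¹ K Q₀ = Q₀`. Multiplying the equation by `M₁⁻¹`
and splitting `x = P₀ x + Q₀ x` in the term `K x` gives `P₀ ẋ + Q₀ x = -M₁⁻¹ K P₀ x + M₁⁻¹ f`.
Applying `P₀` and `Q₀` to this identity separates the differential and the algebraic component,
because `P₀ Q₀ = Q₀ P₀ = 0`.
-/

/-- (Index-1 DAE decoupling.) If `M ẋ + K x = f` with projector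
chain `Q₀² = Q₀`, `M Q₀ = 0`, `P₀ = I − Q₀`, `M₁ = M + K Q₀` invertible, then the
differential component `y = P₀ x` satisfies
`ẏ = −P₀ M₁⁻¹ K y + P₀ M₁⁻¹ f` and the algebraic component `z = Q₀ x` satisfies
`z = −Q₀ M₁⁻¹ K y + Q₀ M₁⁻¹ f`. -/
theorem dae_index1_inherent_ode {n : ℕ}
    (M K Q₀ P₀ M₁ : Matrix (Fin n) (Fin n) ℝ)
    (hQ₀idem : Q₀ * Q₀ = Q₀) (hMQ₀ : M * Q₀ = 0)
    (hP₀ : P₀ = 1 - Q₀) (hM₁ : M₁ = M + K * Q₀) (hM₁inv : IsUnit M₁)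
    (f : Fin n → ℝ) (x x' : ℝ → Fin n → ℝ)
    (hx : ∀ t, HasDerivAt x (x' t) t)
    (hode : ∀ t, M.mulVec (x' t) + K.mulVec (x t) = f) :
    ∀ t : ℝ,
      HasDerivAt (fun s => P₀.mulVec (x s))
        (-((P₀ * M₁⁻¹ * K).mulVec (P₀.mulVec (x t))) + (P₀ * M₁⁻¹).mulVec f) t ∧
      Q₀.mulVec (x t)
        = -((Q₀ * M₁⁻¹ * K).mulVec (P₀.mulVec (x t))) + (Q₀ * M₁⁻¹).mulVec f := by
  intro t
  have hdet : IsUnit M₁.det := (Matrix.isUnit_iff_isUnit_det M₁).mp hM₁inv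
  have hQP : Q₀ * P₀ = 0 := by rw [hP₀, mul_sub, mul_one, hQ₀idem, sub_self]
  have hPQ : P₀ * Q₀ = 0 := by rw [hP₀, sub_mul, one_mul, hQ₀idem, sub_self]
  have hPP : P₀ * P₀ = P₀ := by
    nth_rw 1 [hP₀]
    rw [sub_mul, one_mul, hQP, sub_zero]
  have hM₁P : M₁ * P₀ = M := by
    rw [hM₁, add_mul, mul_assoc, hQP, mul_zero, add_zero, hP₀, mul_sub, mul_one, hMQ₀, sub_zero]
  have hM₁Q : M₁ * Q₀ = K * Q₀ := by
    rw [hM₁, add_mul, mul_assoc, hQ₀idem, hMQ₀, zero_add]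
  have hinvM : M₁⁻¹ * M = P₀ := by
    rw [← hM₁P, Matrix.nonsing_inv_mul_cancel_left _ _ hdet]
  have hinvKQ : M₁⁻¹ * (K * Q₀) = Q₀ := by
    rw [← hM₁Q, Matrix.nonsing_inv_mul_cancel_left _ _ hdet]
  have hinvKP : M₁⁻¹ * K * P₀ = M₁⁻¹ * K - Q₀ := by
    rw [hP₀, mul_sub, mul_one, mul_assoc M₁⁻¹ K Q₀, hinvKQ]
  have key : ∀ A : Matrix (Fin n) (Fin n) ℝ,
      -((A * M₁⁻¹ * K).mulVec (P₀.mulVec (x t))) + (A * M₁⁻¹).mulVec f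
        = (A * P₀).mulVec (x' t) + (A * Q₀).mulVec (x t) := by
    intro A
    rw [← hode t, Matrix.mulVec_add, Matrix.mulVec_mulVec, Matrix.mulVec_mulVec,
      Matrix.mulVec_mulVec, mul_assoc A M₁⁻¹ M, hinvM, mul_assoc A M₁⁻¹ K, mul_assoc A _ P₀,
      hinvKP, mul_sub, Matrix.sub_mulVec]
    abel
  rw [key P₀, key Q₀, hPP, hPQ, hQP, hQ₀idem, Matrix.zero_mulVec, Matrix.zero_mulVec, add_zero,
    zero_add]
  exact ⟨(Matrix.mulVecLin P₀).toContinuousLinearMap.hasFDerivAt.comp_hasDerivAt t (hx t), rfl⟩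
end

section
/- Let M, K be n×n real matrices. Let Q₀ be an n×n real matrix with Q₀·Q₀ = Q₀ and M·Q₀ = 0, set P₀ = I − Q₀, M₁ = M + K·Q₀ and K₁ = K·P₀. Let Q₁ be an n×n real matrix with Q₁·Q₁ = Q₁, M₁·Q₁ = 0 and Q₁·Q₀ = 0, set P₁ = I − Q₁, M₂ = M₁ + K₁·Q₁ and K₂ = K₁·P₁, and assume M₂ is invertible. Let f ∈ ℝⁿ be a fixed vector and let x : ℝ → ℝⁿ be differentiable with M·x'(t) + K·x(t) = f for every t. Define y(t) = P₀·P₁·x(t), z₁(t) = Q₀·P₁·x(t) and z₂(t) = Q₁·x(t). Then for every t: (i) y has derivative y'(t) = −P₀·P₁·M₂⁻¹·K·y(t) + P₀·P₁·M₂⁻¹·f at t; (ii) z₂(t) = −Q₁·M₂⁻¹·K·y(t) + Q₁·M₂⁻¹·f; (iii) z₁(t) = Q₀·Q₁·(M₂⁻¹·K₂)²·y(t) + Q₀·(2Q₁ − I)·M₂⁻¹·K·y(t) − Q₀·Q₁·M₂⁻¹·K₂·M₂⁻¹·f + Q₀·(I − 2Q₁)·M₂⁻¹·f. -/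
/-!
The chain gives `M₂ (P₁ P₀) = M`, `M₂ Q₁ = K P₀ Q₁` and `M₂ Q₀ = K Q₀`. Multiplying the equation by
`M₂⁻¹` therefore turns it into `P₁ P₀ ẋ + M₂⁻¹ K y + Q₁ x + Q₀ x = M₂⁻¹ f`. The projections of this
identity by `P₀ P₁` and `Q₁` are the inherent ODE and the formula for `z₂`. The projection by
`Q₀ P₁` gives `Q₀ x = Q₀ P₁ M₂⁻¹ (f - K y) + Q₀ Q₁ ẋ`, where the hidden derivative `Q₁ ẋ` is found
by differentiating the formula for `z₂` and inserting the inherent ODE; `K₂ y = K y` then brings the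
result to the stated form.
-/

/-- Applying a constant matrix commutes with differentiation. -/
lemma hasDerivAt_mulVec_const {n : ℕ} (A : Matrix (Fin n) (Fin n) ℝ) {x : ℝ → Fin n → ℝ}
    {v : Fin n → ℝ} {t : ℝ} (h : HasDerivAt x v t) :
    HasDerivAt (fun s => A.mulVec (x s)) (A.mulVec v) t :=
  (LinearMap.toContinuousLinearMap A.mulVecLin).hasFDerivAt.comp_hasDerivAt t h

/-- (Index-2 DAE decoupling.) For the index-2 matrix chain
`Q₀² = Q₀`, `M Q₀ = 0`, `P₀ = I − Q₀`, `M₁ = M + K Q₀`, `K₁ = K P₀`,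
`Q₁² = Q₁`, `M₁ Q₁ = 0`, `Q₁ Q₀ = 0`, `P₁ = I − Q₁`, `M₂ = M₁ + K₁ Q₁`,
`K₂ = K₁ P₁` with `M₂` invertible, and a solution of `M ẋ + K x = f`, the
components `y = P₀P₁x`, `z₁ = Q₀P₁x`, `z₂ = Q₁x` satisfy the stated
differential and algebraic equations. -/
theorem dae_index2_inherent_ode {n : ℕ}
    (M K Q₀ P₀ M₁ K₁ Q₁ P₁ M₂ K₂ : Matrix (Fin n) (Fin n) ℝ)
    (hQ₀idem : Q₀ * Q₀ = Q₀) (hMQ₀ : M * Q₀ = 0)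
    (hP₀ : P₀ = 1 - Q₀) (hM₁ : M₁ = M + K * Q₀) (hK₁ : K₁ = K * P₀)
    (hQ₁idem : Q₁ * Q₁ = Q₁) (hM₁Q₁ : M₁ * Q₁ = 0) (hQ₁Q₀ : Q₁ * Q₀ = 0)
    (hP₁ : P₁ = 1 - Q₁) (hM₂ : M₂ = M₁ + K₁ * Q₁) (hK₂ : K₂ = K₁ * P₁)
    (hM₂inv : IsUnit M₂)
    (f : Fin n → ℝ) (x x' : ℝ → Fin n → ℝ)
    (hx : ∀ t, HasDerivAt x (x' t) t)
    (hode : ∀ t, M.mulVec (x' t) + K.mulVec (x t) = f) :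
    ∀ t : ℝ,
      HasDerivAt (fun s => (P₀ * P₁).mulVec (x s))
        (-((P₀ * P₁ * M₂⁻¹ * K).mulVec ((P₀ * P₁).mulVec (x t)))
          + (P₀ * P₁ * M₂⁻¹).mulVec f) t ∧
      Q₁.mulVec (x t)
        = -((Q₁ * M₂⁻¹ * K).mulVec ((P₀ * P₁).mulVec (x t))) + (Q₁ * M₂⁻¹).mulVec f ∧
      (Q₀ * P₁).mulVec (x t)
        = (Q₀ * Q₁ * (M₂⁻¹ * K₂) ^ 2).mulVec ((P₀ * P₁).mulVec (x t))
          + (Q₀ * ((2 : ℝ) • Q₁ - 1) * M₂⁻¹ * K).mulVec ((P₀ * P₁).mulVec (x t))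
          - (Q₀ * Q₁ * M₂⁻¹ * K₂ * M₂⁻¹).mulVec f
          + (Q₀ * (1 - (2 : ℝ) • Q₁) * M₂⁻¹).mulVec f := by
  have hdet : IsUnit M₂.det := (Matrix.isUnit_iff_isUnit_det _).mp hM₂inv
  have hGM₂ : M₂⁻¹ * M₂ = 1 := Matrix.nonsing_inv_mul _ hdet
  set G := M₂⁻¹ with hG
  -- The three relations between `M₂` and the data, multiplied by the inverse `G` of `M₂`.
  have hGM : G * M = P₁ * P₀ := by
    have h : M₂ * (P₁ * P₀) = M := by
      have h1 : M₂ * P₁ = M₁ := by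
        rw [hM₂, hP₁, mul_sub, mul_one, add_mul, hM₁Q₁, mul_assoc K₁, hQ₁idem]; abel
      rw [← mul_assoc, h1, hM₁, hP₀, mul_sub, mul_one, add_mul, hMQ₀, mul_assoc K, hQ₀idem]; abel
    rw [← h, ← mul_assoc, hGM₂, one_mul]
  have hGQ₁ : G * (K * (P₀ * Q₁)) = Q₁ := by
    have h : M₂ * Q₁ = K * (P₀ * Q₁) := by
      rw [hM₂, add_mul, hM₁Q₁, mul_assoc K₁, hQ₁idem, hK₁, zero_add, mul_assoc]
    rw [← h, ← mul_assoc, hGM₂, one_mul]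
  have hGQ₀ : G * (K * Q₀) = Q₀ := by
    have h : M₂ * Q₀ = K * Q₀ := by
      rw [hM₂, add_mul, mul_assoc K₁, hQ₁Q₀, hM₁, add_mul, hMQ₀, mul_assoc, hQ₀idem]; simp
    rw [← h, ← mul_assoc, hGM₂, one_mul]
  have hGK : G * K = G * K * (P₀ * P₁) + Q₁ + Q₀ := by
    have h : K = K * (P₀ * P₁) + K * (P₀ * Q₁) + K * Q₀ := by
      rw [hP₀, hP₁]; noncomm_ring
    calc G * K = G * (K * (P₀ * P₁) + K * (P₀ * Q₁) + K * Q₀) := by rw [← h]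
      _ = _ := by rw [mul_add, mul_add, hGQ₁, hGQ₀, mul_assoc G K]
  have hQP₁ : Q₁ * P₁ = 0 := by rw [hP₁, mul_sub, mul_one, hQ₁idem, sub_self]
  have hPQ₁ : P₁ * Q₁ = 0 := by rw [hP₁, sub_mul, one_mul, hQ₁idem, sub_self]
  have hPQ₀ : P₀ * Q₀ = 0 := by rw [hP₀, sub_mul, one_mul, hQ₀idem, sub_self]
  have hP₁Q₀ : P₁ * Q₀ = Q₀ := by rw [hP₁, sub_mul, one_mul, hQ₁Q₀, sub_zero]
  have hP₁P₁ : P₁ * P₁ = P₁ := by nth_rw 1 [hP₁]; rw [sub_mul, hQP₁, one_mul, sub_zero]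
  have hPPP : P₀ * P₁ * (P₁ * P₀) = P₀ * P₁ := by
    rw [← mul_assoc, mul_assoc P₀, hP₁P₁]
    nth_rw 2 [hP₀]
    rw [mul_sub, mul_one, mul_assoc, hP₁Q₀, hPQ₀, sub_zero]
  have hPP : P₀ * P₁ * (P₀ * P₁) = P₀ * P₁ := by
    calc P₀ * P₁ * (P₀ * P₁) = P₀ * (P₁ * P₁) * P₀ * P₁ := by rw [hP₁P₁]; simp only [mul_assoc]
      _ = P₀ * P₁ * (P₁ * P₀) * P₁ := by simp only [mul_assoc]
      _ = P₀ * P₁ := by rw [hPPP, mul_assoc, hP₁P₁]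
  have hK₂y : K₂ * (P₀ * P₁) = K * (P₀ * P₁) := by
    rw [hK₂, hK₁, mul_assoc K, mul_assoc K, hPP]
  have hQPP : Q₀ * P₁ * (P₁ * P₀) = -(Q₀ * Q₁) := by
    rw [← mul_assoc, mul_assoc Q₀, hP₁P₁]
    rw [hP₀, mul_sub, mul_one, mul_assoc, hP₁Q₀, hQ₀idem, hP₁]; noncomm_ring
  -- The equation multiplied by `G`.
  have hmain : ∀ t, (P₁ * P₀).mulVec (x' t) + ((G * K).mulVec ((P₀ * P₁).mulVec (x t))
      + Q₁.mulVec (x t) + Q₀.mulVec (x t)) = G.mulVec f := by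
    intro t
    rw [← hode t, Matrix.mulVec_add, Matrix.mulVec_mulVec, Matrix.mulVec_mulVec, hGM,
      Matrix.mulVec_mulVec, ← Matrix.add_mulVec, ← Matrix.add_mulVec, ← hGK]
  have hproj : ∀ (A : Matrix (Fin n) (Fin n) ℝ) t,
      (A * (P₁ * P₀)).mulVec (x' t) + ((A * (G * K)).mulVec ((P₀ * P₁).mulVec (x t))
      + (A * Q₁).mulVec (x t) + (A * Q₀).mulVec (x t)) = (A * G).mulVec f := by
    intro A t
    have h := congrArg A.mulVec (hmain t)
    simpa only [Matrix.mulVec_add, Matrix.mulVec_mulVec, mul_assoc] using h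
  have hy : ∀ t, (P₀ * P₁).mulVec (x' t) =
      -((P₀ * P₁ * G * K).mulVec ((P₀ * P₁).mulVec (x t))) + (P₀ * P₁ * G).mulVec f := by
    intro t
    have h := hproj (P₀ * P₁) t
    rw [hPPP, mul_assoc P₀ P₁ Q₁, hPQ₁, mul_assoc P₀ P₁ Q₀, hP₁Q₀, hPQ₀, mul_zero,
      Matrix.zero_mulVec, add_zero, add_zero, ← mul_assoc (P₀ * P₁) G K] at h
    rw [← h]; abel
  have hz₂ : ∀ t, Q₁.mulVec (x t) =
      -((Q₁ * G * K).mulVec ((P₀ * P₁).mulVec (x t))) + (Q₁ * G).mulVec f := by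
    intro t
    have h := hproj Q₁ t
    rw [← mul_assoc Q₁ P₁ P₀, hQP₁, zero_mul, Matrix.zero_mulVec, hQ₁idem, hQ₁Q₀,
      Matrix.zero_mulVec, zero_add, add_zero, ← mul_assoc Q₁ G K] at h
    rw [← h]; abel
  have hQ₁x' : ∀ t, Q₁.mulVec (x' t) = -((Q₁ * G * K).mulVec ((P₀ * P₁).mulVec (x' t))) := by
    intro t
    have h1 := hasDerivAt_mulVec_const Q₁ (hx t)
    have h2 := ((hasDerivAt_mulVec_const (Q₁ * G * K)
      (hasDerivAt_mulVec_const (P₀ * P₁) (hx t))).neg).add_const ((Q₁ * G).mulVec f)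
    refine h1.unique (h2.congr_of_eventuallyEq (Filter.Eventually.of_forall fun s => ?_))
    exact hz₂ s
  intro t
  refine ⟨by rw [← hy t]; exact hasDerivAt_mulVec_const _ (hx t), hz₂ t, ?_⟩
  -- `Q₁ ẋ` in terms of `y` and `f`, from the derivative of the `z₂` formula and the inherent ODE.
  have hhidden : (Q₀ * Q₁).mulVec (x' t) =
      (Q₀ * Q₁ * (G * K₂) ^ 2).mulVec ((P₀ * P₁).mulVec (x t))
        - (Q₀ * Q₁ * G * K₂ * G).mulVec f := by
    have e1 : Q₀ * Q₁ * (G * K₂) ^ 2 * (P₀ * P₁)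
        = Q₀ * (Q₁ * G * K * (P₀ * P₁ * G * K)) * (P₀ * P₁) := by
      have e : (Q₀ * Q₁ * G) * K₂ * G * (K₂ * (P₀ * P₁)) =
          (Q₀ * Q₁ * G) * (K * (P₀ * P₁)) * G * (K * (P₀ * P₁)) := by
        rw [hK₂y, hK₂, hK₁, mul_assoc K]
      simpa only [pow_two, mul_assoc] using e
    have e2 : Q₀ * Q₁ * G * K₂ * G = Q₀ * (Q₁ * G * K * (P₀ * P₁ * G)) := by
      rw [hK₂, hK₁]; simp only [mul_assoc]
    rw [Matrix.mulVec_mulVec, e1, e2, ← Matrix.mulVec_mulVec, hQ₁x' t, hy t]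
    simp only [Matrix.mulVec_add, Matrix.mulVec_neg, Matrix.mulVec_mulVec, mul_assoc]
    abel
  have h0 := hproj (Q₀ * P₁) t
  rw [hQPP, mul_assoc Q₀ P₁ Q₁, hPQ₁, mul_zero, mul_assoc Q₀ P₁ Q₀, hP₁Q₀, hQ₀idem,
    Matrix.zero_mulVec, add_zero, Matrix.neg_mulVec, hhidden] at h0
  have hQz := congrArg Q₀.mulVec (hz₂ t)
  have hz₁ : (Q₀ * P₁).mulVec (x t) = Q₀.mulVec (x t) - Q₀.mulVec (Q₁.mulVec (x t)) := by
    rw [hP₁, mul_sub, mul_one, Matrix.sub_mulVec, Matrix.mulVec_mulVec]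
  rw [hz₁, hQz, ← sub_eq_zero]
  rw [← sub_eq_zero] at h0
  rw [← h0, hP₁]
  simp only [Matrix.mulVec_add, Matrix.mulVec_neg, Matrix.mulVec_mulVec, mul_assoc, two_smul,
    mul_sub, sub_mul, mul_add, add_mul, mul_one, Matrix.sub_mulVec, Matrix.add_mulVec]
  abel
end

section
/- Let M, K be n×n real matrices. Let Q₀ be an n×n real matrix with Q₀·Q₀ = Q₀ and M·Q₀ = 0, set P₀ = I − Q₀, M₁ = M + K·Q₀ and K₁ = K·P₀. Let Q₁ be an n×n real matrix with Q₁·Q₁ = Q₁, M₁·Q₁ = 0 and Q₁·Q₀ = 0, set P₁ = I − Q₁, M₂ = M₁ + K₁·Q₁ and K₂ = K₁·P₁, and assume M₂ is invertible. Then (a) M₂⁻¹·M = P₁·P₀, and (b) M₂⁻¹·K = M₂⁻¹·K₂ + Q₁ + Q₀. -/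
/-!
Both identities become inverse-free after multiplying by `M₂` on the left.
For (a), `M₂ P₁ = M₁` because `M₁ Q₁ = 0` and `Q₁ P₁ = 0`, and `M₁ P₀ = M` because
`M₁ Q₀ = K Q₀`; hence `M = M₂ P₁ P₀`.
For (b), `M₂ Q₁ = K₁ Q₁`, and admissibility `Q₁ Q₀ = 0` gives `M₂ Q₀ = K Q₀`, so
`K = K₁ + K Q₀ = K₂ + K₁ Q₁ + K Q₀ = K₂ + M₂ Q₁ + M₂ Q₀`.
-/

/-- For the index-2 matrix chain with `M₂` invertible:
(a) `M₂⁻¹·M = P₁·P₀` and (b) `M₂⁻¹·K = M₂⁻¹·K₂ + Q₁ + Q₀`. -/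
theorem dae_index2_chain_identities {n : ℕ}
    (M K Q₀ P₀ M₁ K₁ Q₁ P₁ M₂ K₂ : Matrix (Fin n) (Fin n) ℝ)
    (hQ₀idem : Q₀ * Q₀ = Q₀) (hMQ₀ : M * Q₀ = 0)
    (hP₀ : P₀ = 1 - Q₀) (hM₁ : M₁ = M + K * Q₀) (hK₁ : K₁ = K * P₀)
    (hQ₁idem : Q₁ * Q₁ = Q₁) (hM₁Q₁ : M₁ * Q₁ = 0) (hQ₁Q₀ : Q₁ * Q₀ = 0)
    (hP₁ : P₁ = 1 - Q₁) (hM₂ : M₂ = M₁ + K₁ * Q₁) (hK₂ : K₂ = K₁ * P₁)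
    (hM₂inv : IsUnit M₂) :
    M₂⁻¹ * M = P₁ * P₀ ∧ M₂⁻¹ * K = M₂⁻¹ * K₂ + Q₁ + Q₀ := by
  have hdet : IsUnit M₂.det := (Matrix.isUnit_iff_isUnit_det M₂).mp hM₂inv
  have hM₁P₁ : M₁ * P₁ = M₁ := by rw [hP₁, mul_sub, mul_one, hM₁Q₁, sub_zero]
  have hQ₁P₁ : Q₁ * P₁ = 0 := by rw [hP₁, mul_sub, mul_one, hQ₁idem, sub_self]
  have hM₂P₁ : M₂ * P₁ = M₁ := by
    rw [hM₂, add_mul, hM₁P₁, mul_assoc, hQ₁P₁, mul_zero, add_zero]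
  have hM₁Q₀ : M₁ * Q₀ = K * Q₀ := by
    rw [hM₁, add_mul, hMQ₀, mul_assoc, hQ₀idem, zero_add]
  have hM₁P₀ : M₁ * P₀ = M := by
    rw [hP₀, mul_sub, mul_one, hM₁Q₀, hM₁, add_sub_cancel_right]
  have hM₂Q₁ : M₂ * Q₁ = K₁ * Q₁ := by
    rw [hM₂, add_mul, hM₁Q₁, mul_assoc, hQ₁idem, zero_add]
  have hM₂Q₀ : M₂ * Q₀ = K * Q₀ := by
    rw [hM₂, add_mul, hM₁Q₀, mul_assoc, hQ₁Q₀, mul_zero, add_zero]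
  have hM : M = M₂ * (P₁ * P₀) := by rw [← mul_assoc, hM₂P₁, hM₁P₀]
  have hK : K = K₂ + M₂ * Q₁ + M₂ * Q₀ := by
    rw [hM₂Q₁, hM₂Q₀, hK₂, hP₁, mul_sub, mul_one, sub_add_cancel, hK₁, hP₀, mul_sub, mul_one,
      sub_add_cancel]
  constructor
  · conv_lhs => rw [hM]
    exact Matrix.nonsing_inv_mul_cancel_left M₂ _ hdet
  · conv_lhs => rw [hK]
    rw [mul_add, mul_add, Matrix.nonsing_inv_mul_cancel_left M₂ _ hdet,
      Matrix.nonsing_inv_mul_cancel_left M₂ _ hdet]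
end

section
/- Let M, K be n×n real matrices. Let Q₀ be a symmetric idempotent (Q₀ᵀ = Q₀, Q₀·Q₀ = Q₀) whose range equals the kernel of M (for all x ∈ ℝⁿ, M·x = 0 if and only if Q₀·x = x), and set P₀ = I − Q₀ and M₁ = M + K·Q₀. Let Q̃₁ be a symmetric idempotent whose range equals the kernel of M₁ (for all x, M₁·x = 0 if and only if Q̃₁·x = x). Set A = P₀·Q̃₁ and let B be a Moore–Penrose pseudoinverse of A, i.e., A·B·A = A, B·A·B = B, (A·B)ᵀ = A·B, and (B·A)ᵀ = B·A. Assume ker M ∩ ker M₁ = {0}, i.e., M·x = 0 and M₁·x = 0 imply x = 0. Define Q₁ = Q̃₁·B·P₀. Then: (i) Q₁·Q₀ = 0 (admissibility); (ii) Q₁·Q₁ = Q₁ (Q₁ is a projector); (iii) the range of Q₁ equals the kernel of M₁, i.e., M₁·(Q₁·x) = 0 for every x, and Q₁·x = x whenever M₁·x = 0. -/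
/-!
Since `A = P₀ Q̃₁`, the product `Q₁ Q₁ = Q̃₁ B (P₀ Q̃₁) B P₀` collapses by `B A B = B`, and
`P₀ Q₀ = 0` gives admissibility. The range of `Q₁` lies in that of `Q̃₁`, i.e. in `ker M₁`.
Conversely, for `x ∈ ker M₁` the defect `y = Q₁ x - x = Q̃₁ (B A x - x)` lies in `ker M₁`, and
`P₀ y = A B A x - A x = 0` puts it in `ker M`; hence `y = 0` by the trivial intersection.
-/

/-- (Admissible projector for index-2 DAEs.) With `Q₀` the
orthogonal projector onto `ker M`, `P₀ = I − Q₀`, `M₁ = M + K Q₀`, `Q̃₁` the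
orthogonal projector onto `ker M₁`, `A = P₀ Q̃₁`, `B` a Moore–Penrose
pseudoinverse of `A`, `ker M ∩ ker M₁ = {0}`, and `Q₁ = Q̃₁ B P₀`, the matrix `Q₁`
satisfies `Q₁ Q₀ = 0`, `Q₁² = Q₁`, and its range equals `ker M₁`. -/
theorem admissible_projector_index2 {n : ℕ}
    (M K Q₀ P₀ M₁ Qt₁ A B Q₁ : Matrix (Fin n) (Fin n) ℝ)
    (hQ₀symm : Q₀.transpose = Q₀) (hQ₀idem : Q₀ * Q₀ = Q₀)
    (hQ₀ker : ∀ x : Fin n → ℝ, M.mulVec x = 0 ↔ Q₀.mulVec x = x)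
    (hP₀ : P₀ = 1 - Q₀) (hM₁ : M₁ = M + K * Q₀)
    (hQt₁symm : Qt₁.transpose = Qt₁) (hQt₁idem : Qt₁ * Qt₁ = Qt₁)
    (hQt₁ker : ∀ x : Fin n → ℝ, M₁.mulVec x = 0 ↔ Qt₁.mulVec x = x)
    (hA : A = P₀ * Qt₁)
    (hB1 : A * B * A = A) (hB2 : B * A * B = B)
    (hB3 : (A * B).transpose = A * B) (hB4 : (B * A).transpose = B * A)
    (hker : ∀ x : Fin n → ℝ, M.mulVec x = 0 → M₁.mulVec x = 0 → x = 0)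
    (hQ₁ : Q₁ = Qt₁ * B * P₀) :
    Q₁ * Q₀ = 0 ∧ Q₁ * Q₁ = Q₁ ∧
      (∀ x : Fin n → ℝ, M₁.mulVec (Q₁.mulVec x) = 0) ∧
      (∀ x : Fin n → ℝ, M₁.mulVec x = 0 → Q₁.mulVec x = x) := by
  have hP₀Q₀ : P₀ * Q₀ = 0 := by rw [hP₀, Matrix.sub_mul, hQ₀idem, one_mul, sub_self]
  refine ⟨?_, ?_, ?_, ?_⟩
  · rw [hQ₁, Matrix.mul_assoc, hP₀Q₀, Matrix.mul_zero]
  · calc Q₁ * Q₁ = Qt₁ * (B * (P₀ * Qt₁) * B) * P₀ := by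
          rw [hQ₁]; simp only [Matrix.mul_assoc]
      _ = Q₁ := by rw [← hA, hB2, hQ₁]
  · intro x
    rw [hQt₁ker, Matrix.mulVec_mulVec, hQ₁, ← Matrix.mul_assoc, ← Matrix.mul_assoc, hQt₁idem]
  · intro x hx
    have hQx := (hQt₁ker x).1 hx
    have hQ₁x : Q₁.mulVec x = (Qt₁ * B * A).mulVec x := by
      conv_lhs => rw [← hQx]
      rw [Matrix.mulVec_mulVec, hQ₁, hA, Matrix.mul_assoc (Qt₁ * B)]
    have hM₁y : M₁.mulVec (Q₁.mulVec x - x) = 0 := by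
      rw [hQt₁ker, Matrix.mulVec_sub, hQx, hQ₁x, Matrix.mulVec_mulVec, ← Matrix.mul_assoc,
        ← Matrix.mul_assoc, hQt₁idem]
    have hP₀y : P₀.mulVec (Q₁.mulVec x - x) = 0 := by
      have hP₀x : P₀.mulVec x = A.mulVec x := by
        rw [hA, ← Matrix.mulVec_mulVec, hQx]
      rw [Matrix.mulVec_sub, hP₀x, hQ₁x, Matrix.mulVec_mulVec, ← Matrix.mul_assoc,
        ← Matrix.mul_assoc, ← hA, hB1, sub_self]
    have hMy : M.mulVec (Q₁.mulVec x - x) = 0 := by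
      rw [hP₀, Matrix.sub_mulVec, Matrix.one_mulVec, sub_eq_zero] at hP₀y
      exact (hQ₀ker _).2 hP₀y.symm
    exact sub_eq_zero.1 (hker _ hMy hM₁y)
end

section
/- Let m ≥ 1 and for each i ∈ {1, …, m} let A_i and B_i be n×n complex matrices and α_i > 0, ε_i ≥ 0 real numbers such that ‖A_i‖ ≤ α_i, ‖B_i‖ ≤ 1, and ‖A_i − α_i·B_i‖ ≤ ε_i. Set α̃ = ∏_{i=1}^m α_i. Then ‖ A_m·A_{m−1}·⋯·A_1 − α̃·(B_m·B_{m−1}·⋯·B_1) ‖ ≤ Σ_{i=1}^m ε_i·(α̃/α_i). -/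
/-!
Telescoping by peeling off the rightmost factor: with `A'`, `B'` the products of the remaining
factors and `P` the product of the remaining `α_i`,
`A' A₀ - (α₀ P) B' B₀ = A' (A₀ - α₀ B₀) + α₀ (A' - P B') B₀`.
The first summand has norm at most `P ε₀` since `‖A'‖ ≤ P`, and the second is bounded by `α₀` times
the error of the shorter product since `‖B₀‖ ≤ 1`; induction on the number of factors concludes.
-/

/-- The ℓ2 operator norm of a complex matrix, i.e. the operator norm of the
induced linear map between Euclidean spaces (largest singular value). -/
noncomputable def l2opNormC {m n : Type*} [Fintype m] [Fintype n] [DecidableEq n]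
    (A : Matrix m n ℂ) : ℝ :=
  ‖LinearMap.toContinuousLinearMap (Matrix.toEuclideanLin A)‖

open scoped Matrix.Norms.L2Operator

lemma l2opNormC_eq_norm {n : ℕ} (A : Matrix (Fin n) (Fin n) ℂ) : l2opNormC A = ‖A‖ := by
  rw [Matrix.l2_opNorm_def]; rfl

/-- Only an inequality holds in general, since the identity has norm `0` when `n = 0`. -/
lemma l2norm_one_le (n : ℕ) : ‖(1 : Matrix (Fin n) (Fin n) ℂ)‖ ≤ 1 := by
  rcases subsingleton_or_nontrivial (Matrix (Fin n) (Fin n) ℂ) with h | h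
  · rw [Subsingleton.elim (1 : Matrix (Fin n) (Fin n) ℂ) 0, norm_zero]
    exact zero_le_one
  · exact CStarRing.norm_one.le

lemma l2norm_real_smul {n : ℕ} {r : ℝ} (hr : 0 ≤ r) (A : Matrix (Fin n) (Fin n) ℂ) :
    ‖r • A‖ = r * ‖A‖ := by
  have h : r • A = (r : ℂ) • A := by ext i j; simp
  rw [h, norm_smul, Complex.norm_real, Real.norm_of_nonneg hr]

lemma l2norm_reverse_prod_le {n m : ℕ} (A : Fin m → Matrix (Fin n) (Fin n) ℂ) (α : Fin m → ℝ)
    (hα : ∀ i, 0 < α i) (hA : ∀ i, ‖A i‖ ≤ α i) :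
    ‖(List.ofFn A).reverse.prod‖ ≤ ∏ i, α i := by
  induction m with
  | zero => simpa using l2norm_one_le n
  | succ m ih =>
    have h := ih (fun i => A i.succ) (fun i => α i.succ) (fun i => hα _) (fun i => hA _)
    rw [List.ofFn_succ, List.reverse_cons, List.prod_append, List.prod_singleton,
      Fin.prod_univ_succ, mul_comm (α 0)]
    exact (norm_mul_le _ _).trans
      (mul_le_mul h (hA 0) (norm_nonneg _) (Finset.prod_nonneg fun i _ => (hα _).le))

lemma l2norm_reverse_prod_sub_le {n m : ℕ}
    (A B : Fin m → Matrix (Fin n) (Fin n) ℂ) (α ε : Fin m → ℝ)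
    (hα : ∀ i, 0 < α i) (hA : ∀ i, ‖A i‖ ≤ α i) (hB : ∀ i, ‖B i‖ ≤ 1)
    (hAB : ∀ i, ‖A i - α i • B i‖ ≤ ε i) :
    ‖(List.ofFn A).reverse.prod - (∏ i, α i) • (List.ofFn B).reverse.prod‖
      ≤ ∑ i, ε i * ((∏ j, α j) / α i) := by
  induction m with
  | zero => simp
  | succ m ih =>
    have h := ih (fun i => A i.succ) (fun i => B i.succ) (fun i => α i.succ)
      (fun i => ε i.succ) (fun i => hα _) (fun i => hA _) (fun i => hB _) (fun i => hAB _)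
    have hP := l2norm_reverse_prod_le (fun i => A i.succ) (fun i => α i.succ)
      (fun i => hα _) (fun i => hA _)
    have hP0 : 0 ≤ ∏ i : Fin m, α i.succ := Finset.prod_nonneg fun i _ => (hα _).le
    rw [List.ofFn_succ, List.ofFn_succ, List.reverse_cons, List.reverse_cons, List.prod_append,
      List.prod_append, List.prod_singleton, List.prod_singleton, Fin.prod_univ_succ,
      Fin.sum_univ_succ, mul_div_cancel_left₀ _ (hα 0).ne']
    have hsum : ∑ i : Fin m, ε i.succ * ((α 0 * ∏ j : Fin m, α j.succ) / α i.succ)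
        = α 0 * ∑ i : Fin m, ε i.succ * ((∏ j : Fin m, α j.succ) / α i.succ) := by
      rw [Finset.mul_sum]
      exact Finset.sum_congr rfl fun i _ => by ring
    rw [hsum]
    generalize (∑ i : Fin m, ε i.succ * ((∏ j : Fin m, α j.succ) / α i.succ)) = S at h ⊢
    generalize (∏ j : Fin m, α j.succ) = P at h hP hP0 ⊢
    generalize (List.ofFn fun i : Fin m => A i.succ).reverse.prod = A' at h hP ⊢
    generalize (List.ofFn fun i : Fin m => B i.succ).reverse.prod = B' at h ⊢
    have key : A' * A 0 - (α 0 * P) • (B' * B 0)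
        = A' * (A 0 - α 0 • B 0) + α 0 • ((A' - P • B') * B 0) := by
      rw [mul_sub, sub_mul, smul_sub, mul_smul_comm, smul_mul_assoc, smul_smul]
      abel
    rw [key]
    refine (norm_add_le _ _).trans (add_le_add ?_ ?_)
    · rw [mul_comm (ε 0)]
      exact (norm_mul_le _ _).trans (mul_le_mul hP (hAB 0) (norm_nonneg _) hP0)
    · rw [l2norm_real_smul (hα 0).le]
      refine mul_le_mul_of_nonneg_left ?_ (hα 0).le
      exact (norm_mul_le _ _).trans
        ((mul_le_of_le_one_right (norm_nonneg _) (hB 0)).trans h)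

/-- Error accumulation for products of block-encodings: if
`‖A_i‖ ≤ α_i`, `‖B_i‖ ≤ 1` and `‖A_i − α_i B_i‖ ≤ ε_i` for `i = 1, …, m`, then
`‖A_m⋯A_1 − (∏ α_i)·B_m⋯B_1‖ ≤ Σ_i ε_i (∏ α_i)/α_i`. -/
theorem block_encoding_product_error {n m : ℕ} (hm : 1 ≤ m)
    (A B : Fin m → Matrix (Fin n) (Fin n) ℂ) (α ε : Fin m → ℝ)
    (hα : ∀ i, 0 < α i) (hε : ∀ i, 0 ≤ ε i)
    (hA : ∀ i, l2opNormC (A i) ≤ α i)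
    (hB : ∀ i, l2opNormC (B i) ≤ 1)
    (hAB : ∀ i, l2opNormC (A i - α i • B i) ≤ ε i) :
    l2opNormC ((List.ofFn A).reverse.prod
        - (∏ i, α i) • (List.ofFn B).reverse.prod)
      ≤ ∑ i, ε i * ((∏ j, α j) / α i) := by
  simp only [l2opNormC_eq_norm] at hA hB hAB ⊢
  exact l2norm_reverse_prod_sub_le A B α ε hα hA hB hAB
end

section
/- Let α ≥ 1, σ > 0 and ε ∈ (0, 1). Let A and B be n×n complex matrices such that ‖A − α·B‖ ≤ ε_A, where ε_A ≤ σ·ε/2 and ε_A ≤ σ/(2α). Let φ ∈ ℂⁿ with ‖φ‖ = 1, and assume ‖A·v‖ ≥ σ·‖v‖ for every v ∈ ℂⁿ (all singular values of A are at least σ). Then: (i) ‖B·φ‖ ≥ σ/(2α) > 0 (so in particular ‖B·φ‖² ≥ σ²/(4α²)); and (ii) ‖ B·φ/‖B·φ‖ − A·φ/‖A·φ‖ ‖ ≤ ε. -/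
/-- Normalizing is `2 / ‖a‖`-Lipschitz at a nonzero vector `a`, here with `a` compared to the
nonnegative multiple `α • b` of `b`; if `α = 0` the bound is the trivial one. -/
theorem norm_mul_norm_normalize_sub_le {E : Type*} [NormedAddCommGroup E] [NormedSpace ℝ E]
    {a b : E} {α : ℝ} (hα : 0 ≤ α) (ha : 0 < ‖a‖) (hb : 0 < ‖b‖) :
    ‖a‖ * ‖‖b‖⁻¹ • b - ‖a‖⁻¹ • a‖ ≤ 2 * ‖a - α • b‖ := by
  have key : ‖a‖ • (‖b‖⁻¹ • b - ‖a‖⁻¹ • a)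
      = (‖a‖ - ‖α • b‖) • (‖b‖⁻¹ • b) - (a - α • b) := by
    have h1 : ‖α • b‖ • (‖b‖⁻¹ • b) = α • b := by
      rw [norm_smul, Real.norm_of_nonneg hα, smul_smul, mul_assoc, mul_inv_cancel₀ hb.ne', mul_one]
    rw [sub_smul, h1, smul_sub, smul_inv_smul₀ ha.ne']
    abel
  have hunit : ‖‖b‖⁻¹ • b‖ = 1 := by
    rw [norm_smul, norm_inv, norm_norm, inv_mul_cancel₀ hb.ne']
  calc ‖a‖ * ‖‖b‖⁻¹ • b - ‖a‖⁻¹ • a‖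
      = ‖(‖a‖ - ‖α • b‖) • (‖b‖⁻¹ • b) - (a - α • b)‖ := by rw [← key, norm_smul, norm_norm]
    _ ≤ ‖(‖a‖ - ‖α • b‖) • (‖b‖⁻¹ • b)‖ + ‖a - α • b‖ := norm_sub_le _ _
    _ = |‖a‖ - ‖α • b‖| + ‖a - α • b‖ := by rw [norm_smul, hunit, mul_one, Real.norm_eq_abs]
    _ ≤ 2 * ‖a - α • b‖ := by linarith [abs_norm_sub_norm_le a (α • b)]

/-- Applying an approximate block-encoding: if
`‖A − α B‖ ≤ ε_A` with `ε_A ≤ σε/2` and `ε_A ≤ σ/(2α)`, `‖φ‖ = 1` and every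
singular value of `A` is at least `σ`, then `‖Bφ‖ ≥ σ/(2α) > 0` (so
`‖Bφ‖² ≥ σ²/(4α²)`) and the normalized states `Bφ/‖Bφ‖` and `Aφ/‖Aφ‖` are
`ε`-close. -/
theorem approximate_block_encoding_state {n : ℕ}
    (A B : Matrix (Fin n) (Fin n) ℂ) (α σ ε εA : ℝ)
    (hα : 1 ≤ α) (hσ : 0 < σ) (hε : ε ∈ Set.Ioo (0 : ℝ) 1)
    (hAB : l2opNormC (A - α • B) ≤ εA)
    (hεA1 : εA ≤ σ * ε / 2) (hεA2 : εA ≤ σ / (2 * α))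
    (φ : EuclideanSpace ℂ (Fin n)) (hφ : ‖φ‖ = 1)
    (hσmin : ∀ v : EuclideanSpace ℂ (Fin n), σ * ‖v‖ ≤ ‖Matrix.toEuclideanLin A v‖) :
    (0 < ‖Matrix.toEuclideanLin B φ‖ ∧
      σ / (2 * α) ≤ ‖Matrix.toEuclideanLin B φ‖ ∧
      σ ^ 2 / (4 * α ^ 2) ≤ ‖Matrix.toEuclideanLin B φ‖ ^ 2) ∧
    ‖(‖Matrix.toEuclideanLin B φ‖)⁻¹ • Matrix.toEuclideanLin B φ
        - (‖Matrix.toEuclideanLin A φ‖)⁻¹ • Matrix.toEuclideanLin A φ‖ ≤ ε := by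
  have hα0 : 0 < α := by linarith
  have hdiff : ‖Matrix.toEuclideanLin A φ - α • Matrix.toEuclideanLin B φ‖ ≤ εA := by
    have h := (LinearMap.toContinuousLinearMap
      (Matrix.toEuclideanLin (A - α • B))).le_opNorm φ
    rw [hφ, mul_one] at h
    have e : LinearMap.toContinuousLinearMap (Matrix.toEuclideanLin (A - α • B)) φ
        = Matrix.toEuclideanLin A φ - α • Matrix.toEuclideanLin B φ := by
      ext i
      simp [Matrix.toLpLin_apply, Matrix.smul_mulVec]
    rw [e] at h
    exact h.trans hAB
  have hA := hσmin φ
  rw [hφ, mul_one] at hA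
  generalize Matrix.toEuclideanLin A φ = a at *
  generalize Matrix.toEuclideanLin B φ = b at *
  have hb : σ / (2 * α) ≤ ‖b‖ := by
    have h1 := norm_sub_norm_le a (α • b)
    rw [norm_smul, Real.norm_of_nonneg hα0.le] at h1
    have h2 : σ * ε ≤ σ * 1 := mul_le_mul_of_nonneg_left hε.2.le hσ.le
    rw [div_le_iff₀ (by positivity)]
    linarith
  have hpos : 0 < σ / (2 * α) := by positivity
  have hb0 : 0 < ‖b‖ := hpos.trans_le hb
  refine ⟨⟨hb0, hb, ?_⟩, ?_⟩
  · calc σ ^ 2 / (4 * α ^ 2) = (σ / (2 * α)) ^ 2 := by rw [div_pow, mul_pow]; norm_num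
      _ ≤ ‖b‖ ^ 2 := pow_le_pow_left₀ hpos.le hb 2
  · have ha0 : 0 < ‖a‖ := hσ.trans_le hA
    have h1 := norm_mul_norm_normalize_sub_le hα0.le ha0 hb0
    have h2 : σ * ε ≤ ‖a‖ * ε := mul_le_mul_of_nonneg_right hA hε.1.le
    refine le_of_mul_le_mul_left ?_ ha0
    linarith
end
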